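/- arXiv:1301.4437 — 2 statements merged into one kernel-verified Lean document; each statement's English description precedes it below -/
import Mathlib

section
/- The complete elliptic integral of the first kind at the singular value k₊ = (√6+√2)/4 satisfies K(k₊) = (1/π)·2^(-7/3)·3^(3/4)·Γ(1/3)³. -/
open Real MeasureTheory

/-- The complete elliptic integral of the first kind,
`K(k) = ∫₀^{π/2} dθ / √(1 - k² sin²θ)`. -/
noncomputable def ellipticK (k : ℝ) : ℝ :=
  ∫ θ in (0:ℝ)..(π/2), 1 / Real.sqrt (1 - k^2 * Real.sin θ ^ 2)

lemma aux_beta (a b : ℝ) (ha : 0 < a) (hb : 0 < b) :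
    ∫ t in Set.Ioo (0:ℝ) 1, t ^ (a-1) * (1-t) ^ (b-1) =
      Real.Gamma a * Real.Gamma b / Real.Gamma (a+b) := by
  have h := Complex.betaIntegral_eq_Gamma_mul_div (a:ℂ) (b:ℂ) (by simpa) (by simpa)
  rw [Complex.betaIntegral, intervalIntegral.integral_of_le zero_le_one,
    integral_Ioc_eq_integral_Ioo, ← Complex.ofReal_add, Complex.Gamma_ofReal,
    Complex.Gamma_ofReal, Complex.Gamma_ofReal] at h
  have h2 : ∫ x in Set.Ioo (0:ℝ) 1, (x:ℂ) ^ ((a:ℂ)-1) * (1-(x:ℂ)) ^ ((b:ℂ)-1)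
      = ∫ x in Set.Ioo (0:ℝ) 1, ((x ^ (a-1) * (1-x) ^ (b-1) : ℝ) : ℂ) := by
    apply setIntegral_congr_fun measurableSet_Ioo
    intro x hx
    simp only
    rw [Complex.ofReal_mul, Complex.ofReal_cpow hx.1.le,
      Complex.ofReal_cpow (by linarith [hx.2] : (0:ℝ) ≤ 1 - x)]
    push_cast
    rfl
  rw [h2, integral_complex_ofReal] at h
  exact_mod_cast h

lemma aux_cuberoot (t : ℝ) (ht : 0 ≤ t) : (t ^ ((1:ℝ)/3)) ^ 3 = t := by
  rw [← Real.rpow_natCast, ← Real.rpow_mul ht]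
  norm_num

lemma aux_I1 : ∫ x in Set.Ioo (-1:ℝ) 0, 1 / √(1 + x^3) =
    (1/3) * (Real.Gamma (1/3) * Real.Gamma (1/2) / Real.Gamma (1/3+1/2)) := by
  have him : (fun x : ℝ => -x^3) '' Set.Ioo (-1:ℝ) 0 = Set.Ioo 0 1 := by
    ext t
    constructor
    · rintro ⟨x, ⟨h1, h2⟩, rfl⟩
      constructor
      · have : 0 < (-x)^3 := by apply pow_pos; linarith
        simp only; nlinarith
      · have : (-x)^3 < 1 := pow_lt_one₀ (by linarith) (by linarith) (by norm_num)
        simp only; nlinarith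
    · rintro ⟨h1, h2⟩
      refine ⟨-t^((1:ℝ)/3), ⟨?_, ?_⟩, ?_⟩
      · have := Real.rpow_lt_one h1.le h2 (by norm_num : (0:ℝ) < 1/3)
        linarith
      · have := Real.rpow_pos_of_pos h1 ((1:ℝ)/3)
        linarith
      · have := aux_cuberoot t h1.le
        simp only
        linear_combination this
  have hinj : Set.InjOn (fun x : ℝ => -x^3) (Set.Ioo (-1:ℝ) 0) := by
    intro x hx y hy h
    simp only [neg_inj] at h
    exact (Odd.strictMono_pow (by decide : Odd 3)).injective h
  have h := integral_image_eq_integral_abs_deriv_smul (f' := fun x => -(3*x^2)) measurableSet_Ioo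
    (fun x _ => by
      have := ((hasDerivAt_pow 3 x).neg).hasDerivWithinAt (s := Set.Ioo (-1:ℝ) 0)
      norm_num at this
      exact this) hinj
    (fun t : ℝ => t ^ ((1/3:ℝ)-1) * (1-t) ^ ((1/2:ℝ)-1))
  rw [him, aux_beta _ _ (by norm_num) (by norm_num)] at h
  rw [h, ← integral_const_mul]
  apply setIntegral_congr_fun measurableSet_Ioo
  intro x ⟨h1, h2⟩
  have hx : 0 < -x := by linarith
  have hp : 0 < 1 + x^3 := by
    have : (-x)^3 < 1 := pow_lt_one₀ (by linarith) (by linarith) (by norm_num)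
    nlinarith
  have e1 : (-x^3) ^ ((1/3:ℝ)-1) = (x^2)⁻¹ := by
    rw [show -x^3 = (-x)^(3:ℝ) by rw [show (3:ℝ) = ((3:ℕ):ℝ) by norm_num, Real.rpow_natCast]; ring,
      ← Real.rpow_mul hx.le, show (3:ℝ)*(1/3-1) = -((2:ℕ):ℝ) by norm_num, Real.rpow_neg hx.le,
      Real.rpow_natCast]
    ring
  have e2 : (1 - -x^3) ^ ((1/2:ℝ)-1) = 1 / √(1+x^3) := by
    rw [show 1 - -x^3 = 1 + x^3 by ring, Real.sqrt_eq_rpow, one_div (_ ^ _), ← Real.rpow_neg hp.le]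
    norm_num
  simp only [smul_eq_mul]
  rw [e1, e2, abs_neg, abs_of_nonneg (by positivity)]
  have : x ≠ 0 := by linarith
  field_simp

lemma aux_I2 : ∫ x in Set.Ioi (0:ℝ), 1 / √(1 + x^3) =
    (1/3) * (Real.Gamma (1/3) * Real.Gamma (1/6) / Real.Gamma (1/3+1/6)) := by
  have him : (fun x : ℝ => 1 - 1/(1+x^3)) '' Set.Ioi (0:ℝ) = Set.Ioo 0 1 := by
    ext t
    constructor
    · rintro ⟨x, h1, rfl⟩
      have h1 : 0 < x := h1
      have h3 : 0 < x^3 := by positivity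
      constructor
      · have : 1/(1+x^3) < 1 := by rw [div_lt_one (by positivity)]; linarith
        simp only; linarith
      · have : 0 < 1/(1+x^3) := by positivity
        simp only; linarith
    · rintro ⟨h1, h2⟩
      have h3 : 0 < 1 - t := by linarith
      refine ⟨(t/(1-t))^((1:ℝ)/3), ?_, ?_⟩
      · exact Real.rpow_pos_of_pos (by positivity) _
      · simp only
        rw [aux_cuberoot _ (by positivity)]
        field_simp
        ring
  have hinj : Set.InjOn (fun x : ℝ => 1 - 1/(1+x^3)) (Set.Ioi (0:ℝ)) := by
    intro x hx y hy h
    simp only [sub_right_inj, one_div, inv_inj, add_right_inj] at h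
    exact (Odd.strictMono_pow (by decide : Odd 3)).injective h
  have h := integral_image_eq_integral_abs_deriv_smul (f' := fun x => 3*x^2/(1+x^3)^2)
    measurableSet_Ioi
    (fun x hx => by
      have hx : 0 < x := hx
      have h0 : 1 + x^3 ≠ 0 := by positivity
      have := ((((hasDerivAt_pow 3 x).const_add 1).inv h0).const_sub 1).hasDerivWithinAt
        (s := Set.Ioi (0:ℝ))
      simp only [one_div]
      exact this.congr_deriv (by norm_num; ring)) hinj
    (fun t : ℝ => t ^ ((1/3:ℝ)-1) * (1-t) ^ ((1/6:ℝ)-1))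
  rw [him, aux_beta _ _ (by norm_num) (by norm_num)] at h
  rw [h, ← integral_const_mul]
  apply setIntegral_congr_fun measurableSet_Ioi
  intro x hx
  have hx : 0 < x := hx
  have hp : 0 < 1 + x^3 := by positivity
  have e1 : (1 - 1/(1+x^3)) ^ ((1/3:ℝ)-1) = (x^2)⁻¹ * (1+x^3) ^ (2/3:ℝ) := by
    rw [show 1 - 1/(1+x^3) = x^(3:ℝ) / (1+x^3) by
        rw [show (3:ℝ) = ((3:ℕ):ℝ) by norm_num, Real.rpow_natCast]; field_simp; ring,
      Real.div_rpow (by positivity) hp.le,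
      ← Real.rpow_mul hx.le, show (3:ℝ)*(1/3-1) = -((2:ℕ):ℝ) by norm_num, Real.rpow_neg hx.le,
      Real.rpow_natCast, div_eq_mul_inv, ← Real.rpow_neg hp.le]
    norm_num
  have e2 : (1 - (1 - 1/(1+x^3))) ^ ((1/6:ℝ)-1) = (1+x^3) ^ (5/6:ℝ) := by
    rw [show 1 - (1 - 1/(1+x^3)) = (1+x^3)⁻¹ by ring, Real.inv_rpow hp.le, ← Real.rpow_neg hp.le]
    norm_num
  have e3 : (1+x^3) ^ (2/3:ℝ) * (1+x^3) ^ (5/6:ℝ) = (1+x^3)^2 / √(1+x^3) := by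
    rw [← Real.rpow_add hp, Real.sqrt_eq_rpow, ← Real.rpow_natCast (1+x^3) 2, ← Real.rpow_sub hp]
    norm_num
  simp only [smul_eq_mul]
  rw [e1, e2, abs_of_nonneg (by positivity), mul_assoc (x^2)⁻¹, e3]
  have := Real.sqrt_pos.2 hp
  field_simp

lemma aux_total : ∫ x in Set.Ioi (-1:ℝ), 1 / √(1 + x^3) =
    (1/3) * (Real.Gamma (1/3) * Real.Gamma (1/2) / Real.Gamma (1/3+1/2)) +
    (1/3) * (Real.Gamma (1/3) * Real.Gamma (1/6) / Real.Gamma (1/3+1/6)) := by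
  have hg : ∀ y : ℝ, 0 < y → 0 < Real.Gamma y := fun y hy => Real.Gamma_pos_of_pos hy
  have g1 := hg (1/3) (by norm_num)
  have g2 := hg (1/2) (by norm_num)
  have g3 := hg (1/6) (by norm_num)
  have g4 := hg (1/3+1/2) (by norm_num)
  have g5 := hg (1/3+1/6) (by norm_num)
  have i1 : IntegrableOn (fun x : ℝ => 1 / √(1 + x^3)) (Set.Ioc (-1) 0) := by
    by_contra hc
    have h0 := integral_undef hc
    rw [integral_Ioc_eq_integral_Ioo, aux_I1] at h0
    have : 0 < (1/3) * (Real.Gamma (1/3) * Real.Gamma (1/2) / Real.Gamma (1/3+1/2)) := by positivity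
    linarith
  have i2 : IntegrableOn (fun x : ℝ => 1 / √(1 + x^3)) (Set.Ioi 0) := by
    by_contra hc
    have h0 := integral_undef hc
    rw [aux_I2] at h0
    have : 0 < (1/3) * (Real.Gamma (1/3) * Real.Gamma (1/6) / Real.Gamma (1/3+1/6)) := by positivity
    linarith
  rw [← Set.Ioc_union_Ioi_eq_Ioi (by norm_num : (-1:ℝ) ≤ 0),
    setIntegral_union (Set.Ioc_disjoint_Ioi le_rfl) measurableSet_Ioi i1 i2,
    integral_Ioc_eq_integral_Ioo, aux_I1, aux_I2]

lemma aux_ksq : ((√6 + √2) / 4)^2 = (2 + √3)/4 := by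
  have h6 : √6 = √2 * √3 := by rw [← Real.sqrt_mul (by norm_num)]; norm_num
  have h2 : √2^2 = 2 := Real.sq_sqrt (by norm_num)
  have h3 : √3^2 = 3 := Real.sq_sqrt (by norm_num)
  rw [h6]
  have : (√2 * √3 + √2)^2 = √2^2 * (√3^2 + 2*√3 + 1) := by ring
  rw [div_pow, this, h2, h3]
  ring

lemma aux_pos (θ : ℝ) : 0 < 1 - (2+√3)/4 * sin θ^2 := by
  have h3 : √3 < 2 := by rw [Real.sqrt_lt' (by norm_num)]; norm_num
  have := Real.sin_sq_le_one θ
  have := Real.sqrt_nonneg 3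
  nlinarith [sq_nonneg (sin θ)]

lemma aux_subst : ∫ x in Set.Ioi (-1:ℝ), 1 / √(1 + x^3) =
    (1/√(√3)) * ∫ θ in Set.Ioo 0 π, 1 / √(1 - (2+√3)/4 * sin θ^2) := by
  have s3 : 0 < √3 := by positivity
  have q3 : √3^2 = 3 := Real.sq_sqrt (by norm_num)
  have hc : ∀ θ ∈ Set.Ioo 0 π, 0 < 1 + cos θ := by
    intro θ hθ
    have := Real.cos_lt_cos_of_nonneg_of_le_pi hθ.1.le le_rfl hθ.2
    rw [Real.cos_pi] at this
    linarith
  set f : ℝ → ℝ := fun θ => -1 - √3 + 2*√3*(1+cos θ)⁻¹ with hf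
  have him : f '' Set.Ioo 0 π = Set.Ioi (-1) := by
    ext t
    constructor
    · rintro ⟨θ, hθ, rfl⟩
      have h1 := hc θ hθ
      have h2 : cos θ < 1 := by
        have := Real.cos_lt_cos_of_nonneg_of_le_pi le_rfl hθ.2.le hθ.1
        simpa using this
      have h3 : 1 < 2 * (1+cos θ)⁻¹ := by
        rw [← div_eq_mul_inv, one_lt_div h1]; linarith
      simp only [hf, Set.mem_Ioi]
      nlinarith
    · intro ht
      have ht : -1 < t := ht
      have hp : 0 < 1 + t + √3 := by linarith
      have a1 : -1 < 2*√3/(1+t+√3) - 1 := by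
        have : 0 < 2*√3/(1+t+√3) := by positivity
        linarith
      have a2 : 2*√3/(1+t+√3) - 1 < 1 := by
        have : 2*√3/(1+t+√3) < 2 := by rw [div_lt_iff₀ hp]; linarith
        linarith
      refine ⟨arccos (2*√3/(1+t+√3) - 1), ⟨Real.arccos_pos.2 a2, ?_⟩, ?_⟩
      · refine lt_of_le_of_ne (Real.arccos_le_pi _) ?_
        intro h
        rw [Real.arccos_eq_pi] at h
        linarith
      · simp only [hf]
        rw [Real.cos_arccos a1.le a2.le]
        field_simp
        ring
  have hinj : Set.InjOn f (Set.Ioo 0 π) := by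
    intro x hx y hy h
    have h2 : 2*√3*(1+cos x)⁻¹ = 2*√3*(1+cos y)⁻¹ := by
      simp only [hf] at h; linarith
    have h3 := mul_left_cancel₀ (by positivity) h2
    rw [inv_inj] at h3
    exact Real.injOn_cos (Set.Ioo_subset_Icc_self hx) (Set.Ioo_subset_Icc_self hy) (by linarith)
  have h := integral_image_eq_integral_abs_deriv_smul (f := f)
    (f' := fun θ => 2*√3*sin θ/(1+cos θ)^2) measurableSet_Ioo
    (fun θ hθ => by
      have := (((((Real.hasDerivAt_cos θ).const_add 1).inv (hc θ hθ).ne').const_mul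
        (2*√3)).const_add (-1-√3)).hasDerivWithinAt (s := Set.Ioo 0 π)
      exact this.congr_deriv (by ring)) hinj
    (fun x : ℝ => 1 / √(1+x^3))
  rw [him] at h
  rw [h, ← integral_const_mul]
  apply setIntegral_congr_fun measurableSet_Ioo
  intro θ hθ
  have h1 := hc θ hθ
  have hs : 0 < sin θ := Real.sin_pos_of_mem_Ioo hθ
  have hk := aux_pos θ
  have key : 1 + (f θ)^3 = (2*√3*sin θ/(1+cos θ)^2)^2 * (√3 * (1 - (2+√3)/4 * sin θ^2)) := by
    have hss : sin θ^2 = 1 - cos θ^2 := by rw [← Real.sin_sq_add_cos_sq θ]; ring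
    simp only [hf]
    rw [div_pow, mul_pow, mul_pow, hss]
    generalize √3 = r at *
    generalize cos θ = c at *
    field_simp
    have r3 : r^3 = 3*r := by rw [pow_succ, q3]
    have r4 : r^4 = 9 := by rw [show r^4 = (r^2)^2 by ring, q3]; norm_num
    ring_nf
    simp only [r3, r4, q3]
    ring
  simp only [smul_eq_mul]
  rw [key, Real.sqrt_mul (by positivity), Real.sqrt_sq (by positivity),
    Real.sqrt_mul (by positivity), abs_of_nonneg (by positivity)]
  have := Real.sqrt_pos.2 hk
  have := Real.sqrt_pos.2 s3
  field_simp

lemma aux_half : ∫ θ in Set.Ioo 0 π, 1 / √(1 - (2+√3)/4 * sin θ^2) =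
    2 * ellipticK ((√6 + √2) / 4) := by
  have hcont : Continuous (fun θ : ℝ => 1 / √(1 - (2+√3)/4 * sin θ^2)) := by
    apply Continuous.div continuous_const (by fun_prop)
    intro θ
    exact (Real.sqrt_pos.2 (aux_pos θ)).ne'
  rw [← integral_Ioc_eq_integral_Ioo, ← intervalIntegral.integral_of_le Real.pi_pos.le,
    ← intervalIntegral.integral_add_adjacent_intervals (b := π/2)
      (hcont.intervalIntegrable _ _) (hcont.intervalIntegrable _ _)]
  have h := intervalIntegral.integral_comp_sub_left (a := 0) (b := π/2)
    (fun θ : ℝ => 1 / √(1 - (2+√3)/4 * sin θ^2)) π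
  simp only [Real.sin_pi_sub, sub_zero] at h
  rw [show π - π/2 = π/2 by ring] at h
  rw [← h, ellipticK, aux_ksq]
  ring

/-- `K(k₊) = (1/π)·2^(-7/3)·3^(3/4)·Γ(1/3)³` for the singular value `k₊ = (√6+√2)/4`. -/
theorem ellipticK_singular_value_plus :
    ellipticK ((Real.sqrt 6 + Real.sqrt 2) / 4) =
      (1 / π) * (2:ℝ) ^ (-(7:ℝ)/3) * (3:ℝ) ^ ((3:ℝ)/4) * Real.Gamma (1/3) ^ 3 := by
  have h := aux_total
  rw [aux_subst, aux_half] at h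
  have hg : ∀ y : ℝ, 0 < y → 0 < Real.Gamma y := fun y hy => Real.Gamma_pos_of_pos hy
  have g1 := hg (1/3) (by norm_num)
  have g3 := hg (1/6) (by norm_num)
  have g4 := hg (5/6) (by norm_num)
  have g6 := hg (2/3) (by norm_num)
  have r1 := Real.Gamma_mul_Gamma_one_sub (1/6)
  have r2 := Real.Gamma_mul_Gamma_one_sub (1/3)
  have r3 := Real.Gamma_mul_Gamma_add_half (1/6)
  rw [show π * (1/6) = π/6 by ring, Real.sin_pi_div_six] at r1
  rw [show π * (1/3) = π/3 by ring, Real.sin_pi_div_three] at r2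
  norm_num at r1 r2 r3 h
  rw [Real.Gamma_one_half_eq] at h
  have w1 : (2:ℝ) ^ (-(7:ℝ)/3) = 2 ^ (2/3:ℝ) / 8 := by
    rw [show (-(7:ℝ)/3) = 2/3 - ((3:ℕ):ℝ) by norm_num, Real.rpow_sub (by norm_num),
      Real.rpow_natCast]
    norm_num
  have w2 : (3:ℝ) ^ ((3:ℝ)/4) = √(√3) ^ 3 := by
    rw [Real.sqrt_eq_rpow, Real.sqrt_eq_rpow, ← Real.rpow_mul (by norm_num), ← Real.rpow_natCast,
      ← Real.rpow_mul (by norm_num)]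
    norm_num
  rw [w1, w2]
  have sp : 0 < √π := Real.sqrt_pos.2 Real.pi_pos
  have sq : √π^2 = π := Real.sq_sqrt Real.pi_pos.le
  have q3 : 0 < √3 := by positivity
  have qq : 0 < √(√3) := by positivity
  have qs : √(√3)^2 = √3 := Real.sq_sqrt q3.le
  have hpi := Real.pi_pos
  generalize Real.Gamma (1/3) = A at *
  generalize Real.Gamma (1/6) = B at *
  generalize Real.Gamma (2/3) = D at *
  generalize Real.Gamma (5/6) = E at *
  generalize (2:ℝ) ^ (2/3:ℝ) = w at *
  generalize ellipticK _ = K at *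
  generalize √(√3) = q at *
  generalize √3 = r at *
  generalize √π = s at *
  generalize π = p at *
  subst sq qs
  have hE : E = 2 * s^2 / B := by
    field_simp at r1 ⊢
    linarith
  have hD : D = 2 * s^2 / (q^2 * A) := by
    field_simp at r2 ⊢
    linarith
  have hB : B = A^2 * w * q^2 / (2 * s) := by
    rw [hD] at r3
    field_simp at r3 ⊢
    nlinarith
  have hK : K = q * A * B / (4 * s) := by
    rw [hE] at h
    field_simp at h ⊢
    nlinarith
  rw [hK, hB]
  field_simp
  ring
end

section
/- With ω = e^{iπ/3} (equivalently ω = -1/2 - i√3/2 in the paper's convention; state for ω a primitive 6th or cube root as appropriate), the hypergeometric value ₂F₁(1/2,1/2;1;-ω) equals ((1+i)/(π²√2))·2^(-7/3)·3^(3/4)·Γ(1/3)³ + ((1-i)/(π²√2))·2^(-7/3)·3^(1/4)·Γ(1/3)³, where ω = (-1 + i√3)/2 is replaced so that -ω = (1 + i√3)/2. -/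
open Real MeasureTheory Complex

/-- The Gauss hypergeometric function `F(z) = ₂F₁(1/2, 1/2; 1; z)`, realized through its
Euler-type integral representation `F(z) = (2/π) ∫₀^{π/2} (1 - z sin²θ)^(-1/2) dθ`,
which provides the analytic continuation of the hypergeometric series to the cut plane
`ℂ ∖ [1,∞)`, in particular to the boundary point `-ω = (1+i√3)/2` of the unit disk. -/
noncomputable def hypF (z : ℂ) : ℂ :=
  (2 / π) * ∫ θ in (0:ℝ)..(π/2), ((1:ℂ) - z * (Real.sin θ : ℂ)^2) ^ (-(1/2) : ℂ)


/-- Radial primitive of `(1 - w^3)^(-1/2)`. -/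
noncomputable def GG (w : ℂ) : ℂ :=
  ∫ s in (0:ℝ)..1, w * (1 - ((s:ℂ) * w)^3) ^ (-(1/2) : ℂ)

lemma one_sub_cube_re {w : ℂ} (hw : ‖w‖ < 1) : 0 < (1 - w^3).re := by
  have h1 : (w^3).re ≤ ‖w^3‖ := Complex.re_le_norm _
  have h2 : ‖w^3‖ < 1 := by
    rw [norm_pow]; exact pow_lt_one₀ (norm_nonneg _) hw (by norm_num)
  simp only [Complex.sub_re, Complex.one_re]; linarith

lemma one_sub_cube_slit {w : ℂ} (hw : ‖w‖ < 1) : 1 - w^3 ∈ Complex.slitPlane :=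
  Or.inl (one_sub_cube_re hw)

lemma norm_smul_lt {w : ℂ} (hw : ‖w‖ ≤ 1) {s : ℝ} (h0 : 0 ≤ s) (h1 : s < 1) : ‖(s:ℂ) * w‖ < 1 := by
  rw [norm_mul, Complex.norm_real, Real.norm_of_nonneg h0]
  nlinarith [norm_nonneg w]

lemma bound_GG {w : ℂ} (hw : ‖w‖ ≤ 1) {s : ℝ} (h0 : 0 ≤ s) (h1 : s < 1) :
    ‖w * (1 - ((s:ℂ) * w)^3) ^ (-(1/2) : ℂ)‖ ≤ (1 - s) ^ (-(1/2) : ℝ) := by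
  have hs := one_sub_cube_slit (norm_smul_lt hw h0 h1)
  have hne := Complex.slitPlane_ne_zero hs
  have e : ‖(1 - ((s:ℂ) * w)^3) ^ (-(1/2) : ℂ)‖ = ‖1 - ((s:ℂ) * w)^3‖ ^ (-(1/2) : ℝ) := by
    have := Complex.norm_cpow_real (1 - ((s:ℂ) * w)^3) (-(1/2))
    rw [← this]; push_cast; rfl
  have hl : 1 - s ≤ ‖1 - ((s:ℂ) * w)^3‖ := by
    have a1 : ‖(1:ℂ)‖ - ‖((s:ℂ) * w)^3‖ ≤ ‖1 - ((s:ℂ) * w)^3‖ := norm_sub_norm_le _ _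
    have a2 : ‖((s:ℂ) * w)^3‖ ≤ s := by
      rw [norm_pow, norm_mul, Complex.norm_real, Real.norm_of_nonneg h0]
      have a3 : s * ‖w‖ ≤ s := by nlinarith [norm_nonneg w]
      have a4 : 0 ≤ s * ‖w‖ := by positivity
      calc (s * ‖w‖)^3 ≤ s * ‖w‖ := pow_le_of_le_one a4 (by linarith) (by norm_num)
        _ ≤ s := a3
    rw [norm_one] at a1; linarith
  rw [norm_mul, e]
  calc ‖w‖ * ‖1 - ((s:ℂ) * w)^3‖ ^ (-(1/2) : ℝ) ≤ 1 * ‖1 - ((s:ℂ) * w)^3‖ ^ (-(1/2) : ℝ) := by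
        gcongr
    _ ≤ (1 - s) ^ (-(1/2) : ℝ) := by
        rw [one_mul]
        exact Real.rpow_le_rpow_of_nonpos (by linarith) hl (by norm_num)

lemma ae_ne_one : ∀ᵐ s : ℝ, s ≠ 1 := by
  rw [ae_iff]; simp

lemma contOn_GG : ContinuousOn GG (Metric.closedBall 0 1) := by
  intro w₀ hw₀
  unfold GG
  refine intervalIntegral.continuousWithinAt_of_dominated_interval
    (bound := fun s => (1 - s) ^ (-(1/2) : ℝ)) ?_ ?_ ?_ ?_
  · refine Filter.Eventually.of_forall fun w => ?_
    exact Measurable.aestronglyMeasurable (by fun_prop)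
  · filter_upwards [self_mem_nhdsWithin] with w hw
    have hw' : ‖w‖ ≤ 1 := by simpa using hw
    filter_upwards [ae_ne_one] with s hs1 hs
    rw [Set.uIoc_of_le zero_le_one] at hs
    exact bound_GG hw' hs.1.le (lt_of_le_of_ne hs.2 hs1)
  · have h : IntervalIntegrable (fun x : ℝ => x ^ (-(1/2) : ℝ)) volume 0 1 :=
      intervalIntegral.intervalIntegrable_rpow' (by norm_num)
    have := (h.comp_sub_left 1).symm
    simpa using this
  · filter_upwards [ae_ne_one] with s hs1 hs
    rw [Set.uIoc_of_le zero_le_one] at hs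
    have hw' : ‖w₀‖ ≤ 1 := by simpa using hw₀
    have hsl := one_sub_cube_slit (norm_smul_lt hw' hs.1.le (lt_of_le_of_ne hs.2 hs1))
    apply ContinuousAt.continuousWithinAt
    apply continuousAt_id.mul
    exact ContinuousAt.cpow (by fun_prop) continuousAt_const hsl

lemma hasDerivAt_GG {w : ℂ} (hw : ‖w‖ < 1) : HasDerivAt GG ((1 - w^3) ^ (-(1/2) : ℂ)) w := by
  have hd : DifferentiableOn ℂ (fun w : ℂ => (1 - w^3) ^ (-(1/2) : ℂ)) (Metric.ball 0 1) := by
    intro v hv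
    have hv' : ‖v‖ < 1 := by simpa using hv
    apply DifferentiableAt.differentiableWithinAt
    exact DifferentiableAt.cpow (by fun_prop) (by fun_prop) (one_sub_cube_slit hv')
  obtain ⟨F, hF⟩ := hd.isExactOn_ball
  have key : ∀ v ∈ Metric.ball (0:ℂ) 1, GG v = F v - F 0 := by
    intro v hv
    have hv' : ‖v‖ < 1 := by simpa using hv
    have hlt : ∀ s ∈ Set.uIcc (0:ℝ) 1, ‖(s:ℂ) * v‖ < 1 := by
      intro s hs
      rw [Set.uIcc_of_le zero_le_one] at hs
      rw [norm_mul, Complex.norm_real, Real.norm_of_nonneg hs.1]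
      nlinarith [norm_nonneg v, hs.1, hs.2]
    unfold GG
    rw [intervalIntegral.integral_eq_sub_of_hasDerivAt (f := fun s : ℝ => F ((s:ℂ) * v))]
    · simp
    · intro s hs
      have h1 := hF ((s:ℂ) * v) (by simpa using hlt s hs)
      have h2 : HasDerivAt (fun s : ℝ => (s:ℂ) * v) v s := by
        simpa using (Complex.ofRealCLM.hasDerivAt (x := s)).mul_const v
      have := h1.comp s h2
      rw [mul_comm]
      exact this
    · apply ContinuousOn.intervalIntegrable
      intro s hs
      apply ContinuousAt.continuousWithinAt
      apply continuousAt_const.mul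
      exact ContinuousAt.cpow (by fun_prop) continuousAt_const (one_sub_cube_slit (hlt s hs))
  have h1 := (hF w (by simpa using hw)).sub_const (F 0)
  refine h1.congr_of_eventuallyEq ?_
  filter_upwards [Metric.isOpen_ball.mem_nhds (show w ∈ Metric.ball (0:ℂ) 1 by simpa using hw)] with v hv
  exact key v hv

lemma GG_root {ρ : ℂ} (h : ρ^3 = 1) : GG ρ = ρ * GG 1 := by
  unfold GG
  rw [← intervalIntegral.integral_const_mul]
  congr 1; ext s
  rw [mul_pow, h]; simp

lemma GG_one_beta : GG 1 = (1/3) * Complex.betaIntegral (1/3) (1/2) := by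
  unfold GG Complex.betaIntegral
  have him : (fun s : ℝ => s^3) '' Set.Ioo 0 1 = Set.Ioo 0 1 := by
    ext y; constructor
    · rintro ⟨s, ⟨h0, h1⟩, rfl⟩
      exact ⟨by positivity, pow_lt_one₀ h0.le h1 (by norm_num)⟩
    · rintro ⟨h0, h1⟩
      refine ⟨y ^ (1/3 : ℝ), ⟨by positivity, Real.rpow_lt_one h0.le h1 (by norm_num)⟩, ?_⟩
      show (y ^ (1/3 : ℝ))^3 = y
      rw [← Real.rpow_natCast, ← Real.rpow_mul h0.le]; norm_num
  have hinj : Set.InjOn (fun s : ℝ => s^3) (Set.Ioo 0 1) := by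
    intro a ha b hb hab
    exact (pow_left_inj₀ ha.1.le hb.1.le (by norm_num)).1 hab
  have := MeasureTheory.integral_image_eq_integral_abs_deriv_smul (measurableSet_Ioo (a := (0:ℝ)) (b := 1))
    (f := fun s => s^3) (f' := fun s => 3 * s^2)
    (fun x _ => by simpa using (hasDerivAt_pow 3 x).hasDerivWithinAt) hinj
    (fun x : ℝ => (x : ℂ) ^ ((1/3:ℂ) - 1) * (1 - (x : ℂ)) ^ ((1/2:ℂ) - 1))
  rw [him] at this
  rw [intervalIntegral.integral_of_le zero_le_one, intervalIntegral.integral_of_le zero_le_one,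
    integral_Ioc_eq_integral_Ioo, integral_Ioc_eq_integral_Ioo, this, ← integral_const_mul]
  refine setIntegral_congr_fun measurableSet_Ioo fun s hs => ?_
  have h0 : 0 < s := hs.1
  have hsc : (s:ℂ) ≠ 0 := by exact_mod_cast h0.ne'
  have e1 : ((s^3 : ℝ) : ℂ) ^ ((1/3:ℂ) - 1) = ((s:ℂ)^2)⁻¹ := by
    have : ((1/3:ℂ) - 1) = ((-(2/3) : ℝ) : ℂ) := by push_cast; norm_num
    rw [this, ← Complex.ofReal_cpow (by positivity), ← Real.rpow_natCast, ← Real.rpow_mul h0.le]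
    have : ((3:ℕ):ℝ) * (-(2/3)) = -((2:ℕ):ℝ) := by norm_num
    rw [this, Real.rpow_neg h0.le, Real.rpow_natCast]; push_cast; rfl
  have e2 : ((1/2:ℂ) - 1) = -(1/2) := by norm_num
  rw [e1, e2, abs_of_pos (by positivity), Complex.real_smul]
  push_cast
  simp only [mul_one, one_mul]
  field_simp

lemma GG_one : GG 1 = ((Real.Gamma (1/3) ^ 3 * √3 / (3 * 2 ^ (4/3 : ℝ) * π) : ℝ) : ℂ) := by
  rw [GG_one_beta, Complex.betaIntegral_eq_Gamma_mul_div _ _ (by norm_num) (by norm_num)]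
  have a : Complex.Gamma (1/3) = (Real.Gamma (1/3) : ℝ) := by
    rw [← Complex.Gamma_ofReal]; push_cast; rfl
  have b : Complex.Gamma (1/2) = (√π : ℝ) := by
    rw [← Real.Gamma_one_half_eq, ← Complex.Gamma_ofReal]; push_cast; rfl
  have c : Complex.Gamma (1/3 + 1/2) = (Real.Gamma (5/6) : ℝ) := by
    rw [← Complex.Gamma_ofReal]; congr 1; push_cast; norm_num
  rw [a, b, c]
  have dup := Real.Gamma_mul_Gamma_add_half (1/3)
  have hrefl := Real.Gamma_mul_Gamma_one_sub (1/3)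
  have s3 : Real.sin (π * (1/3)) = √3 / 2 := by
    rw [← Real.sin_pi_div_three]; congr 1; ring
  rw [s3] at hrefl
  norm_num at dup hrefl
  have g1 : 0 < Real.Gamma (1/3) := Real.Gamma_pos_of_pos (by norm_num)
  have g2 : 0 < Real.Gamma (5/6) := Real.Gamma_pos_of_pos (by norm_num)
  have p43 : (2:ℝ) ^ (4/3 : ℝ) = 2 * 2 ^ (1/3 : ℝ) := by
    rw [show (4/3 : ℝ) = 1 + 1/3 by norm_num, Real.rpow_add (by norm_num), Real.rpow_one]
  have hp := Real.pi_pos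
  have h3 : √3 * √3 = 3 := Real.mul_self_sqrt (by norm_num)
  have hpp : √π * √π = π := Real.mul_self_sqrt hp.le
  have h3p : 0 < √3 := by positivity
  have hsp : 0 < √π := by positivity
  have h2p : 0 < (2:ℝ) ^ (1/3:ℝ) := by positivity
  rw [p43]
  rw [show (1/3 : ℂ) = ((1/3 : ℝ) : ℂ) by push_cast; rfl]
  rw [← Complex.ofReal_mul, ← Complex.ofReal_div, ← Complex.ofReal_mul]
  congr 1
  clear a b c
  generalize Real.Gamma (1/3) = A at *
  generalize Real.Gamma (5/6) = B at *
  generalize Real.Gamma (2/3) = C at *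
  generalize (2:ℝ) ^ (1/3:ℝ) = t at *
  have e1 : A * C * √3 = 2 * π := by rw [hrefl]; field_simp
  field_simp
  linear_combination (-√π * t) * e1 - A * √3 * dup


lemma cpow_split {r : ℝ} (hr : 0 < r) {u v : ℂ} (hu : u ≠ 0) (hv : v ≠ 0)
    (h : Complex.arg u + Complex.arg v ∈ Set.Ioc (-π) π) :
    (((r^2 : ℝ) : ℂ) * (u * v)) ^ (-(1/2) : ℂ)
      = (r:ℂ)⁻¹ * (u ^ (-(1/2) : ℂ) * v ^ (-(1/2) : ℂ)) := by
  have hrc : (r:ℂ) ≠ 0 := by exact_mod_cast hr.ne'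
  have hr2 : 0 < r^2 := by positivity
  have huv : u * v ≠ 0 := mul_ne_zero hu hv
  have hne : (((r^2 : ℝ) : ℂ) * (u * v)) ≠ 0 :=
    mul_ne_zero (by exact_mod_cast hr2.ne') huv
  rw [Complex.cpow_def_of_ne_zero hne, Complex.cpow_def_of_ne_zero hu,
    Complex.cpow_def_of_ne_zero hv, Complex.log_ofReal_mul hr2 huv, Complex.log_mul hu hv h,
    Real.log_pow]
  have : (r:ℂ)⁻¹ = Complex.exp (-(Real.log r : ℂ)) := by
    rw [Complex.exp_neg, ← Complex.ofReal_exp, Real.exp_log hr]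
  rw [this, ← Complex.exp_add, ← Complex.exp_add]
  congr 1
  push_cast
  ring

/-- The edge of the triangle. -/
noncomputable def gam (θ : ℝ) : ℂ := Complex.I * √3 * ((Real.sin θ : ℂ)^2 - 1/2) - 1/2

lemma s3c : ((√3 : ℝ) : ℂ)^2 = 3 := by
  rw [← Complex.ofReal_pow, Real.sq_sqrt (by norm_num)]; norm_num

lemma gam_normSq (θ : ℝ) : ‖gam θ‖^2 = 1 - 3 * (Real.sin θ)^2 * (Real.cos θ)^2 := by
  have h3 : √3 ^ 2 = 3 := Real.sq_sqrt (by norm_num)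
  have e : gam θ = ((-(1/2) : ℝ) : ℂ) + ((√3 * (Real.sin θ ^2 - 1/2) : ℝ) : ℂ) * Complex.I := by
    unfold gam; push_cast; ring
  rw [e, ← Complex.normSq_eq_norm_sq, Complex.normSq_add_mul_I, mul_pow, h3, Real.cos_sq']
  ring

lemma exp_pi_six : Complex.exp ((π/6 : ℝ) * Complex.I) = (√3 + Complex.I) / 2 := by
  rw [Complex.exp_mul_I, ← Complex.ofReal_cos, ← Complex.ofReal_sin, Real.cos_pi_div_six,
    Real.sin_pi_div_six]
  push_cast; ring

lemma gam_cube {q : ℝ} (hq : q^2 = √3) (θ : ℝ) : 1 - gam θ ^ 3 =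
    (((q^3 * (Real.sin θ * Real.cos θ))^2 : ℝ) : ℂ) * (Complex.exp ((π/6 : ℝ) * Complex.I) *
      (1 - (1 + Complex.I * √3) / 2 * (Real.sin θ : ℂ)^2)) := by
  rw [exp_pi_six]
  have h6 : (q^3 * (Real.sin θ * Real.cos θ))^2 = 3 * √3 * (Real.sin θ^2 * (1 - Real.sin θ^2)) := by
    have h3 : √3 ^ 2 = 3 := Real.sq_sqrt (by norm_num)
    rw [← Real.cos_sq']
    calc _ = (q^2)^2 * q^2 * (Real.sin θ^2 * Real.cos θ^2) := by ring
      _ = _ := by rw [hq, h3]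
  rw [h6]
  unfold gam
  push_cast
  generalize (Real.sin θ : ℂ) = x
  have h3 := s3c
  generalize ((√3 : ℝ) : ℂ) = t at *
  have hI := Complex.I_sq
  generalize Complex.I = i at *
  have ht3 : t^3 = 3 * t := by rw [pow_succ, h3]
  have hi3 : i^3 = -i := by rw [pow_succ, hI]; ring
  ring_nf
  simp only [h3, hI, ht3, hi3]
  ring

lemma one_sub_re (θ : ℝ) : 0 < (1 - (1 + Complex.I * √3) / 2 * (Real.sin θ : ℂ)^2).re := by
  have e : 1 - (1 + Complex.I * √3) / 2 * (Real.sin θ : ℂ)^2 =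
    ((1 - Real.sin θ^2 / 2 : ℝ) : ℂ) + ((-√3 / 2 * Real.sin θ^2 : ℝ) : ℂ) * Complex.I := by
    push_cast; ring
  rw [e]
  simp only [Complex.add_re, Complex.ofReal_re, Complex.re_ofReal_mul, Complex.I_re]
  nlinarith [Real.sin_sq_le_one θ]

lemma exp_sixth_cpow : (Complex.exp ((π/6 : ℝ) * Complex.I)) ^ (-(1/2) : ℂ)
    = Complex.exp (-((π/12 : ℝ) * Complex.I)) := by
  have hp := Real.pi_pos
  rw [Complex.cpow_def_of_ne_zero (Complex.exp_ne_zero _), Complex.log_exp]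
  · congr 1; push_cast; ring
  · simp; linarith
  · simp; linarith

lemma gam_cpow {q : ℝ} (hq0 : 0 < q) (hq : q^2 = √3) {θ : ℝ} (hθ : θ ∈ Set.Ioo 0 (π/2)) :
    (1 - gam θ ^ 3) ^ (-(1/2) : ℂ) = ((q^3 * (Real.sin θ * Real.cos θ) : ℝ) : ℂ)⁻¹ *
      (Complex.exp (-((π/12 : ℝ) * Complex.I)) *
        (1 - (1 + Complex.I * √3) / 2 * (Real.sin θ : ℂ)^2) ^ (-(1/2) : ℂ)) := by
  have hs : 0 < Real.sin θ := Real.sin_pos_of_pos_of_lt_pi hθ.1 (by linarith [hθ.2, Real.pi_pos])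
  have hc : 0 < Real.cos θ := Real.cos_pos_of_mem_Ioo ⟨by linarith [hθ.1, Real.pi_pos], hθ.2⟩
  have hre := one_sub_re θ
  have hne : (1 - (1 + Complex.I * √3) / 2 * (Real.sin θ : ℂ)^2) ≠ 0 := by
    intro h; rw [h] at hre; simp at hre
  rw [gam_cube hq, cpow_split (by positivity) (Complex.exp_ne_zero _) hne, exp_sixth_cpow]
  have ha := Complex.abs_arg_lt_pi_div_two_iff.2 (Or.inl hre)
  have hp := Real.pi_pos
  rw [abs_lt] at ha
  rw [Complex.arg_exp_mul_I, (toIocMod_eq_self _).2 ⟨by linarith, by linarith⟩]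
  constructor <;> linarith [ha.1, ha.2]

lemma gam_hasDeriv (θ : ℝ) : HasDerivAt gam
    (Complex.I * √3 * (2 * (Real.sin θ * Real.cos θ : ℝ))) θ := by
  have h1 : HasDerivAt (fun t : ℝ => Real.sin t ^ 2) (2 * (Real.sin θ * Real.cos θ)) θ := by
    have := (Real.hasDerivAt_sin θ).pow 2
    exact this.congr_deriv (by push_cast; ring)
  have h2 := ((h1.ofReal_comp.sub_const (1/2)).const_mul (Complex.I * √3)).sub_const (1/2)
  have h3 : gam = fun x : ℝ => Complex.I * √3 * (((Real.sin x ^ 2 : ℝ) : ℂ) - 1/2) - 1/2 := by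
    funext t; rw [gam, Complex.ofReal_pow]
  rw [h3]
  exact h2.congr_deriv (by rw [Complex.ofReal_mul 2]; norm_cast)

lemma integral_eq {q : ℝ} (hq0 : 0 < q) (hq : q^2 = √3) :
    ∫ θ in (0:ℝ)..(π/2), ((1:ℂ) - ((1 + Complex.I * √3) / 2) * (Real.sin θ : ℂ)^2) ^ (-(1/2) : ℂ)
     = (q:ℂ)^3 / 2 * Complex.exp ((π/12 : ℝ) * Complex.I) * GG 1 := by
  have hp := Real.pi_pos
  set E := Complex.exp (-((π/12 : ℝ) * Complex.I)) with hE
  have hE0 : E ≠ 0 := Complex.exp_ne_zero _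
  have hqc : (q:ℂ) ≠ 0 := by exact_mod_cast hq0.ne'
  have h3c : ((√3 : ℝ):ℂ) ≠ 0 := by simp
  have main := intervalIntegral.integral_eq_sub_of_hasDerivAt_of_le (a := 0) (b := π/2)
    (f := fun θ => GG (gam θ))
    (f' := fun θ => (2 * Complex.I * √3 * E / (q:ℂ)^3) *
      ((1:ℂ) - ((1 + Complex.I * √3) / 2) * (Real.sin θ : ℂ)^2) ^ (-(1/2) : ℂ))
    (by positivity) ?_ ?_ ?_
  · rw [intervalIntegral.integral_const_mul] at main
    have g0 : gam 0 ^ 3 = 1 := by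
      have := gam_cube hq 0; simp at this; linear_combination -this
    have g1 : gam (π/2) ^ 3 = 1 := by
      have := gam_cube hq (π/2); simp at this; linear_combination -this
    rw [GG_root g0, GG_root g1] at main
    have hd : gam (π/2) - gam 0 = Complex.I * √3 := by simp [gam]; ring
    rw [← sub_mul, hd] at main
    have hE' : Complex.exp ((π/12 : ℝ) * Complex.I) = E⁻¹ := by rw [hE, Complex.exp_neg, inv_inv]
    rw [hE']
    field_simp at main ⊢
    linear_combination main
  · refine contOn_GG.comp (fun θ _ => (gam_hasDeriv θ).continuousAt.continuousWithinAt) ?_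
    intro θ _
    have := gam_normSq θ
    simp only [Metric.mem_closedBall, dist_zero_right]
    have h2 : ‖gam θ‖^2 ≤ 1 := by
      rw [this]; nlinarith [sq_nonneg (Real.sin θ * Real.cos θ)]
    nlinarith [norm_nonneg (gam θ)]
  · intro θ hθ
    have hs : 0 < Real.sin θ := Real.sin_pos_of_pos_of_lt_pi hθ.1 (by linarith [hθ.2, Real.pi_pos])
    have hc : 0 < Real.cos θ := Real.cos_pos_of_mem_Ioo ⟨by linarith [hθ.1, Real.pi_pos], hθ.2⟩
    have hn : ‖gam θ‖ < 1 := by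
      have h1 : 0 < 3 * (Real.sin θ)^2 * (Real.cos θ)^2 := by positivity
      have := gam_normSq θ
      nlinarith [norm_nonneg (gam θ)]
    have h := (hasDerivAt_GG hn).comp θ (gam_hasDeriv θ)
    rw [gam_cpow hq0 hq hθ] at h
    refine h.congr_deriv ?_
    have hsc : (Real.sin θ : ℂ) ≠ 0 := by exact_mod_cast hs.ne'
    have hcc : (Real.cos θ : ℂ) ≠ 0 := by exact_mod_cast hc.ne'
    rw [Complex.ofReal_mul, Complex.ofReal_mul, Complex.ofReal_pow]
    generalize (1 - (1 + Complex.I * √3) / 2 * (Real.sin θ : ℂ)^2) ^ (-(1/2) : ℂ) = X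
    rw [← hE]
    field_simp
  · apply Continuous.intervalIntegrable
    apply continuous_const.mul
    rw [continuous_iff_continuousAt]
    intro θ
    exact ContinuousAt.cpow (by fun_prop) continuousAt_const (Or.inl (one_sub_re θ))

lemma exp_twelfth : Complex.exp ((π/12 : ℝ) * Complex.I) =
    ((√3 + 1) + (√3 - 1) * Complex.I) / (2 * √2) := by
  have e : (((π/12 : ℝ):ℂ) * Complex.I) = (π/3 : ℝ) * Complex.I + (-(π/4) : ℝ) * Complex.I := by
    push_cast; ring
  have h2 : ((√2 : ℝ) : ℂ)^2 = 2 := by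
    rw [← Complex.ofReal_pow, Real.sq_sqrt (by norm_num)]; norm_num
  have h20 : ((√2 : ℝ) : ℂ) ≠ 0 := by simp
  rw [e, Complex.exp_add, Complex.exp_mul_I, Complex.exp_mul_I]
  simp only [← Complex.ofReal_cos, ← Complex.ofReal_sin]
  rw [Real.cos_neg, Real.sin_neg, Real.cos_pi_div_three, Real.sin_pi_div_three,
    Real.cos_pi_div_four, Real.sin_pi_div_four]
  push_cast
  field_simp
  rw [h2]
  linear_combination (-2 * (√3:ℂ)) * Complex.I_sq

/-- With `ω = (-1 + i√3)/2` (so that `-ω = (1 + i√3)/2`),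
`₂F₁(1/2,1/2;1;-ω) = ((1+i)/(π²√2))·2^(-7/3)·3^(3/4)·Γ(1/3)³
 + ((1-i)/(π²√2))·2^(-7/3)·3^(1/4)·Γ(1/3)³`. -/
theorem hypF_at_minus_omega :
    hypF ((1 + Complex.I * Real.sqrt 3) / 2) =
      ((1 + Complex.I) / (π^2 * Real.sqrt 2)) *
        ((2:ℝ) ^ (-(7:ℝ)/3) * (3:ℝ) ^ ((3:ℝ)/4) * Real.Gamma (1/3) ^ 3 : ℝ) +
      ((1 - Complex.I) / (π^2 * Real.sqrt 2)) *
        ((2:ℝ) ^ (-(7:ℝ)/3) * (3:ℝ) ^ ((1:ℝ)/4) * Real.Gamma (1/3) ^ 3 : ℝ) := by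
  have hq0 : (0:ℝ) < (3:ℝ) ^ ((1:ℝ)/4) := by positivity
  have hq : ((3:ℝ) ^ ((1:ℝ)/4))^2 = √3 := by
    rw [← Real.rpow_natCast, ← Real.rpow_mul (by norm_num), Real.sqrt_eq_rpow]; norm_num
  have hq3 : (3:ℝ) ^ ((3:ℝ)/4) = ((3:ℝ) ^ ((1:ℝ)/4))^3 := by
    rw [← Real.rpow_natCast, ← Real.rpow_mul (by norm_num)]; norm_num
  have h73 : (2:ℝ) ^ (-(7:ℝ)/3) = (2 * (2:ℝ) ^ (4/3 : ℝ))⁻¹ := by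
    rw [show -(7:ℝ)/3 = -(1 + 4/3) by norm_num, Real.rpow_neg (by norm_num),
      Real.rpow_add (by norm_num), Real.rpow_one]
  unfold hypF
  rw [integral_eq hq0 hq, GG_one, exp_twelfth, hq3, h73]
  have hcq : (((3:ℝ) ^ ((1:ℝ)/4) : ℝ) : ℂ)^2 = (√3 : ℝ) := by rw [← hq]; push_cast; rfl
  have ht0 : (((2:ℝ) ^ (4/3 : ℝ) : ℝ) : ℂ) ≠ 0 := by
    have : (0:ℝ) < (2:ℝ) ^ (4/3 : ℝ) := by positivity
    exact_mod_cast this.ne'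
  generalize (3:ℝ) ^ ((1:ℝ)/4) = q at *
  generalize (2:ℝ) ^ (4/3:ℝ) = t at *
  generalize Real.Gamma (1/3) = A at *
  have hpi : (π : ℂ) ≠ 0 := by exact_mod_cast Real.pi_ne_zero
  have h20 : ((√2 : ℝ) : ℂ) ≠ 0 := by simp
  have h3 := s3c
  push_cast
  rw [← hcq] at h3 ⊢
  generalize ((√2 : ℝ) : ℂ) = w at *
  field_simp
  linear_combination ((q:ℂ) * (A:ℂ)^3 * ((q:ℂ)^2 * (1 + Complex.I) + (1 - Complex.I))) * h3
end
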